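/- Let α ∈ (1,2), ρ ∈ (1−1/α, 1/α), ρ̂ = 1−ρ, and set κ̂(λ) = λ·Γ(1−αρ+λ)/Γ(2−α+λ) for λ > 0. For a, w > 0 define F(a,w) = (sin(παρ̂)/π)·e^{−(1−αρ)w}(1−e^{−w})^{−αρ̂}·[ e^{(α−1)a}(1−e^{−a})^{αρ̂} e^{−w}(e^{a}−e^{−w})^{−1} + (1−αρ)·∫_0^{1−e^{−a}} t^{αρ̂−1}(1−t)^{1−α} dt ]. Then for all q, β > 0 with q ≠ β, ∫_0^∞ ∫_0^∞ e^{−qa−βw} F(a,w) dw da = (κ̂(q)−κ̂(β)) / ((q−β)·κ̂(q)). -/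

import Mathlib

open MeasureTheory

/-- The descending ladder Laplace exponent `κ̂(λ) = λ Γ(1-αρ+λ)/Γ(2-α+λ)`. -/
noncomputable def kappaHat (α ρ lam : ℝ) : ℝ :=
  lam * Real.Gamma (1 - α * ρ + lam) / Real.Gamma (2 - α + lam)

/-- The density in `w` of the undershoot at first passage below `-a`. -/
noncomputable def undershootDensity (α ρ a w : ℝ) : ℝ :=
  Real.sin (Real.pi * α * (1 - ρ)) / Real.pi * Real.exp (-(1 - α * ρ) * w) *
    (1 - Real.exp (-w)) ^ (-(α * (1 - ρ))) *
    (Real.exp ((α - 1) * a) * (1 - Real.exp (-a)) ^ (α * (1 - ρ)) * Real.exp (-w) *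
        (Real.exp a - Real.exp (-w))⁻¹ +
      (1 - α * ρ) *
        ∫ t in (0:ℝ)..(1 - Real.exp (-a)), t ^ (α * (1 - ρ) - 1) * (1 - t) ^ (1 - α))

open Filter Topology Set ProbabilityTheory

theorem integrableOn_beta_and_integral {u v : ℝ} (hu : 0 < u) (hv : 0 < v) :
    IntegrableOn (fun x : ℝ => x ^ (u - 1) * (1 - x) ^ (v - 1)) (Ioo 0 1) ∧
      ∫ x in Ioo (0:ℝ) 1, x ^ (u - 1) * (1 - x) ^ (v - 1) = beta u v := by
  have hb := beta_pos hu hv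
  have h1 : ∫⁻ x in Ioo (0:ℝ) 1,
      ENNReal.ofReal (1 / beta u v * x ^ (u - 1) * (1 - x) ^ (v - 1)) = 1 := by
    rw [← lintegral_betaPDF, lintegral_betaPDF_eq_one hu hv]
  have hnn : 0 ≤ᵐ[volume.restrict (Ioo (0:ℝ) 1)]
      fun x => 1 / beta u v * x ^ (u - 1) * (1 - x) ^ (v - 1) := by
    refine (ae_restrict_iff' measurableSet_Ioo).2 (Eventually.of_forall fun x hx => ?_)
    have h0 : 0 < x := hx.1
    have h2 : 0 < 1 - x := sub_pos.2 hx.2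
    simp only [Pi.zero_apply]
    positivity
  have hm : Measurable fun x : ℝ => 1 / beta u v * x ^ (u - 1) * (1 - x) ^ (v - 1) := by
    fun_prop
  have hint : Integrable (fun x : ℝ => 1 / beta u v * x ^ (u - 1) * (1 - x) ^ (v - 1))
      (volume.restrict (Ioo (0:ℝ) 1)) := by
    refine ⟨hm.aestronglyMeasurable, ?_⟩
    rw [hasFiniteIntegral_iff_ofReal hnn, h1]
    exact ENNReal.one_lt_top
  have hval : ∫ x in Ioo (0:ℝ) 1, 1 / beta u v * x ^ (u - 1) * (1 - x) ^ (v - 1) = 1 := by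
    rw [integral_eq_lintegral_of_nonneg_ae hnn hm.aestronglyMeasurable, h1, ENNReal.toReal_one]
  have e : (fun x : ℝ => x ^ (u - 1) * (1 - x) ^ (v - 1)) =
      fun x => beta u v * (1 / beta u v * x ^ (u - 1) * (1 - x) ^ (v - 1)) := by
    funext x
    field_simp
  rw [e]
  refine ⟨hint.const_mul _, ?_⟩
  rw [integral_const_mul, hval, mul_one]

theorem image_exp_neg_Ioi : (fun a : ℝ => Real.exp (-a)) '' Ioi 0 = Ioo 0 1 := by
  ext x
  constructor
  · rintro ⟨a, ha, rfl⟩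
    exact ⟨Real.exp_pos _, by simpa using ha⟩
  · rintro ⟨h0, h1⟩
    exact ⟨-Real.log x, by simpa using Real.log_neg h0 h1, by simp [Real.exp_log h0]⟩

theorem integrableOn_exp_beta_and_integral {u v : ℝ} (hu : 0 < u) (hv : 0 < v) :
    IntegrableOn (fun a : ℝ => Real.exp (-(u * a)) * (1 - Real.exp (-a)) ^ (v - 1)) (Ioi 0) ∧
      ∫ a in Ioi (0:ℝ), Real.exp (-(u * a)) * (1 - Real.exp (-a)) ^ (v - 1) = beta u v := by
  have hd : ∀ a ∈ Ioi (0:ℝ),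
      HasDerivWithinAt (fun a : ℝ => Real.exp (-a)) (-Real.exp (-a)) (Ioi 0) a := fun a _ => by
    simpa using ((hasDerivAt_neg a).exp).hasDerivWithinAt
  have hinj : InjOn (fun a : ℝ => Real.exp (-a)) (Ioi 0) := fun a _ b _ h => by simpa using h
  have e : (fun a : ℝ => Real.exp (-(u * a)) * (1 - Real.exp (-a)) ^ (v - 1)) =
      fun a => |-Real.exp (-a)| • ((Real.exp (-a)) ^ (u - 1) * (1 - Real.exp (-a)) ^ (v - 1)) := by
    funext a
    rw [abs_neg, abs_of_pos (Real.exp_pos _), smul_eq_mul, ← mul_assoc, ← Real.exp_mul,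
      ← Real.exp_add]
    ring_nf
  obtain ⟨h1, h2⟩ := integrableOn_beta_and_integral hu hv
  rw [← image_exp_neg_Ioi] at h1 h2
  rw [e]
  exact ⟨(integrableOn_image_iff_integrableOn_abs_deriv_smul measurableSet_Ioi hd hinj _).1 h1,
    by rw [← h2, integral_image_eq_integral_abs_deriv_smul measurableSet_Ioi hd hinj]⟩

theorem tendsto_Gamma_add_nat_div {x : ℝ} (hx : 0 < x) :
    Tendsto (fun n : ℕ => Real.Gamma (x + n + 1) / ((n:ℝ) ^ x * n.factorial)) atTop (𝓝 1) := by
  have hG := Real.Gamma_pos_of_pos hx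
  have hprod : ∀ n : ℕ, Real.Gamma (x + n + 1) =
      Real.Gamma x * ∏ j ∈ Finset.range (n + 1), (x + j) := by
    intro n
    induction n with
    | zero => simp [Real.Gamma_add_one hx.ne', mul_comm]
    | succ k ih =>
      rw [Finset.prod_range_succ, ← mul_assoc, ← ih, Real.Gamma_add_one (by positivity)]
      push_cast
      ring_nf
  have h := (tendsto_const_nhds (x := Real.Gamma x)).div (Real.GammaSeq_tendsto_Gamma x) hG.ne'
  rw [div_self hG.ne'] at h
  refine h.congr fun n => ?_
  simp only [Pi.div_apply, Real.GammaSeq]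
  rw [hprod, div_div_eq_mul_div]

/-- The ratio of Gamma functions whose increments telescope. -/
noncomputable def gammaRatio (b p s : ℝ) : ℝ :=
  Real.Gamma (s + 1) * Real.Gamma (p + 1 - b) / (Real.Gamma (s + 1 - b) * Real.Gamma (p + 1))

theorem tendsto_gammaRatio_add_nat {b p s : ℝ} (hb : b < 1) (hp : 0 < p) (hs : 0 < s) :
    Tendsto (fun n : ℕ => gammaRatio b (p + n) (s + n)) atTop (𝓝 1) := by
  rw [← tendsto_add_atTop_iff_nat 1]
  have h := ((tendsto_Gamma_add_nat_div (x := s + 1) (by linarith)).mul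
    (tendsto_Gamma_add_nat_div (x := p + 1 - b) (by linarith))).div
    ((tendsto_Gamma_add_nat_div (x := s + 1 - b) (by linarith)).mul
    (tendsto_Gamma_add_nat_div (x := p + 1) (by linarith))) (by norm_num)
  norm_num only at h
  refine h.congr' ?_
  filter_upwards [eventually_gt_atTop 0] with n hn
  have hn' : (0:ℝ) < n := by exact_mod_cast hn
  have e : (n:ℝ) ^ (s + 1) * (n:ℝ) ^ (p + 1 - b) = (n:ℝ) ^ (s + 1 - b) * (n:ℝ) ^ (p + 1) := by
    rw [← Real.rpow_add hn', ← Real.rpow_add hn']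
    ring_nf
  have hf : (0:ℝ) < n.factorial := by exact_mod_cast n.factorial_pos
  have hA : 0 < (n:ℝ) ^ (s + 1 - b) * (n:ℝ) ^ (p + 1) * (n.factorial * n.factorial) := by
    positivity
  simp only [Pi.div_apply, gammaRatio]
  rw [div_mul_div_comm, div_mul_div_comm, mul_mul_mul_comm ((n:ℝ) ^ (s + 1)), e,
    mul_mul_mul_comm ((n:ℝ) ^ (s + 1 - b)) (n.factorial : ℝ), div_div_div_cancel_right₀ hA.ne']
  push_cast
  ring_nf

theorem beta_mul_beta_eq {b p s : ℝ} (hb0 : 0 < b) (hb : b < 1) (hp : 0 < p) (hs : 0 < s)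
    (hps : p ≠ s) :
    beta (p + 1 - b) (b + 1) * beta (s + 1) (1 - b) =
      Real.Gamma b * Real.Gamma (1 - b) / (p - s) *
        (gammaRatio b (p + 1) (s + 1) - gammaRatio b p s) := by
  have e1 : Real.Gamma (p + 1 - b + (b + 1)) = (p + 1) * Real.Gamma (p + 1) := by
    rw [← Real.Gamma_add_one (by positivity)]; ring_nf
  have e2 : Real.Gamma (s + 1 + (1 - b)) = (s + 1 - b) * Real.Gamma (s + 1 - b) := by
    rw [← Real.Gamma_add_one (by linarith)]; ring_nf
  have e3 : Real.Gamma (s + 1 + 1 - b) = (s + 1 - b) * Real.Gamma (s + 1 - b) := by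
    rw [← Real.Gamma_add_one (by linarith)]; ring_nf
  have e4 : Real.Gamma (p + 1 + 1 - b) = (p + 1 - b) * Real.Gamma (p + 1 - b) := by
    rw [← Real.Gamma_add_one (by linarith)]; ring_nf
  have e5 : Real.Gamma (s + 1 + 1) = (s + 1) * Real.Gamma (s + 1) :=
    Real.Gamma_add_one (by linarith)
  have e6 : Real.Gamma (p + 1 + 1) = (p + 1) * Real.Gamma (p + 1) :=
    Real.Gamma_add_one (by linarith)
  have h1 := (Real.Gamma_pos_of_pos (show 0 < s + 1 - b by linarith)).ne'
  have h2 := (Real.Gamma_pos_of_pos (show 0 < p + 1 by linarith)).ne'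
  have h3 : s + 1 - b ≠ 0 := by linarith
  have h4 : p + 1 ≠ 0 := by linarith
  have h5 : p - s ≠ 0 := sub_ne_zero.2 hps
  unfold beta gammaRatio
  rw [e1, e2, e3, e4, e5, e6, Real.Gamma_add_one hb0.ne']
  field_simp
  ring

theorem hasSum_beta_mul_beta {b p s : ℝ} (hb0 : 0 < b) (hb : b < 1) (hp : 0 < p) (hs : 0 < s)
    (hps : p ≠ s) :
    HasSum (fun n : ℕ => beta (p + n + 1 - b) (b + 1) * beta (s + n + 1) (1 - b))
      (Real.Gamma b * Real.Gamma (1 - b) / (p - s) * (1 - gammaRatio b p s)) := by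
  rw [hasSum_iff_tendsto_nat_of_nonneg]
  · have h := ((tendsto_gammaRatio_add_nat hb hp hs).sub_const (gammaRatio b p s)).const_mul
      (Real.Gamma b * Real.Gamma (1 - b) / (p - s))
    refine h.congr fun n => ?_
    have hsum := Finset.sum_range_sub (fun n : ℕ => gammaRatio b (p + n) (s + n)) n
    simp only [Nat.cast_zero, add_zero] at hsum
    rw [← hsum, Finset.mul_sum]
    refine Finset.sum_congr rfl fun k _ => ?_
    rw [beta_mul_beta_eq hb0 hb (by positivity) (by positivity) (by simpa using hps)]
    push_cast
    ring_nf
  · intro n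
    have hn : (0:ℝ) ≤ n := n.cast_nonneg
    exact (mul_pos (beta_pos (by linarith) (by linarith))
      (beta_pos (by linarith) (by linarith))).le

theorem integrableOn_and_integral_eq_of_hasSum {F : ℕ → ℝ → ℝ} {f : ℝ → ℝ} {s : Set ℝ} {S : ℝ}
    (hs : MeasurableSet s) (hint : ∀ n, IntegrableOn (F n) s) (hpos : ∀ n, ∀ a ∈ s, 0 ≤ F n a)
    (hsum : HasSum (fun n => ∫ a in s, F n a) S) (hS : S ≠ 0)
    (hf : ∀ a ∈ s, HasSum (fun n => F n a) (f a)) :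
    IntegrableOn f s ∧ ∫ a in s, f a = S := by
  have hnorm : ∀ n, ∫ a in s, ‖F n a‖ = ∫ a in s, F n a := fun n =>
    setIntegral_congr_fun hs fun a ha => Real.norm_of_nonneg (hpos n a ha)
  have h := hasSum_integral_of_summable_integral_norm (F := F) hint (by
    simpa only [hnorm] using hsum.summable)
  have e : ∫ a in s, (∑' n, F n a) = ∫ a in s, f a :=
    setIntegral_congr_fun hs fun a ha => (hf a ha).tsum_eq
  rw [e] at h
  have hv := h.unique hsum
  exact ⟨.of_integral_ne_zero (by rw [hv]; exact hS), hv⟩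

theorem integrableOn_and_integral_exp_mul_incompleteBeta {b d q : ℝ} (hb : 0 < b) (hd : 0 < d)
    (hq : 0 < q) :
    IntegrableOn (fun a : ℝ => Real.exp (-(q * a)) *
        ∫ t in (0:ℝ)..(1 - Real.exp (-a)), t ^ (b - 1) * (1 - t) ^ (d - 1)) (Ioi 0) ∧
      ∫ a in Ioi (0:ℝ), Real.exp (-(q * a)) *
        ∫ t in (0:ℝ)..(1 - Real.exp (-a)), t ^ (b - 1) * (1 - t) ^ (d - 1) =
      beta (q + d) b / q := by
  set φ : ℝ → ℝ := fun t => t ^ (b - 1) * (1 - t) ^ (d - 1) with hφ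
  set H : ℝ → ℝ := fun x => ∫ t in (0:ℝ)..x, φ t with hH
  have hφi : IntegrableOn φ (Icc 0 1) := by
    rw [integrableOn_Icc_iff_integrableOn_Ioo]
    exact (integrableOn_beta_and_integral hb hd).1
  have hHc : ContinuousOn H (Icc 0 1) := by
    have := intervalIntegral.continuousOn_primitive_interval (f := φ) (μ := volume) (a := 0) (b := 1)
      (by rwa [uIcc_of_le zero_le_one])
    rwa [uIcc_of_le zero_le_one] at this
  have hHd : ∀ x ∈ Ioo (0:ℝ) 1, HasDerivAt H (φ x) x := by
    intro x hx
    have hm : Measurable φ := by fun_prop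
    refine intervalIntegral.integral_hasDerivAt_right ?_
      hm.stronglyMeasurable.stronglyMeasurableAtFilter ?_
    · rw [intervalIntegrable_iff_integrableOn_Icc_of_le hx.1.le]
      exact hφi.mono_set (Icc_subset_Icc_right hx.2.le)
    · exact (continuousAt_id.rpow_const (Or.inl hx.1.ne')).mul
        ((continuousAt_const.sub continuousAt_id).rpow_const (Or.inl (sub_pos.2 hx.2).ne'))
  have hmaps : MapsTo (fun a : ℝ => 1 - Real.exp (-a)) (Ici 0) (Icc 0 1) := fun a ha =>
    ⟨by simpa using ha, by simpa using (Real.exp_pos (-a)).le⟩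
  have hhc : ContinuousOn (fun a : ℝ => H (1 - Real.exp (-a))) (Ici 0) :=
    hHc.comp (by fun_prop) hmaps
  obtain ⟨M, hM⟩ := isCompact_Icc.exists_bound_of_continuousOn hHc
  have hexp : IntegrableOn (fun a : ℝ => Real.exp (-(q * a))) (Ioi 0) := by
    simpa only [neg_mul] using integrableOn_exp_mul_Ioi (neg_lt_zero.2 hq) 0
  have hint : IntegrableOn (fun a : ℝ => Real.exp (-(q * a)) * H (1 - Real.exp (-a))) (Ioi 0) := by
    refine Integrable.mul_bdd (c := M) hexp
      ((hhc.mono Ioi_subset_Ici_self).aestronglyMeasurable measurableSet_Ioi) ?_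
    refine (ae_restrict_iff' measurableSet_Ioi).2 (Eventually.of_forall fun a ha => ?_)
    exact hM _ (hmaps (Ioi_subset_Ici_self ha))
  refine ⟨hint, ?_⟩
  obtain ⟨hi, hv⟩ := integrableOn_exp_beta_and_integral (u := q + d) (v := b) (by positivity) hb
  have hderiv : ∀ a ∈ Ioi (0:ℝ),
      HasDerivAt (fun a : ℝ => Real.exp (-(q * a)) * H (1 - Real.exp (-a)))
        (Real.exp (-((q + d) * a)) * (1 - Real.exp (-a)) ^ (b - 1) -
          q * (Real.exp (-(q * a)) * H (1 - Real.exp (-a)))) a := by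
    intro a ha
    have h1 : HasDerivAt (fun a : ℝ => 1 - Real.exp (-a)) (Real.exp (-a)) a := by
      simpa using ((hasDerivAt_neg a).exp).const_sub 1
    have h2 : HasDerivAt (fun a : ℝ => Real.exp (-(q * a))) (Real.exp (-(q * a)) * (-q)) a := by
      simpa using (((hasDerivAt_id a).const_mul q).neg).exp
    have h3 := (hHd (1 - Real.exp (-a))
      ⟨by simpa using ha, by simpa using Real.exp_pos (-a)⟩).comp a h1
    have h4 := h2.mul h3
    refine HasDerivAt.congr_deriv h4 ?_
    have e : Real.exp (-((q + d) * a)) =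
        Real.exp (-(q * a)) * (Real.exp (-a) ^ (d - 1) * Real.exp (-a)) := by
      rw [← Real.exp_mul, ← Real.exp_add, ← Real.exp_add]
      ring_nf
    have e2 : φ (1 - Real.exp (-a)) =
        (1 - Real.exp (-a)) ^ (b - 1) * Real.exp (-a) ^ (d - 1) := by
      simp only [hφ, sub_sub_cancel]
    rw [e, e2, Function.comp_apply]
    ring
  have hlim : Tendsto (fun a : ℝ => Real.exp (-(q * a)) * H (1 - Real.exp (-a))) atTop (𝓝 0) := by
    have h0 : Tendsto (fun a : ℝ => Real.exp (-(q * a))) atTop (𝓝 0) :=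
      Real.tendsto_exp_neg_atTop_nhds_zero.comp (tendsto_id.const_mul_atTop hq)
    refine squeeze_zero_norm' ?_ (by simpa using h0.mul_const M)
    filter_upwards [eventually_ge_atTop 0] with a ha
    rw [norm_mul, Real.norm_of_nonneg (Real.exp_pos _).le]
    exact mul_le_mul_of_nonneg_left (hM _ (hmaps ha)) (Real.exp_pos _).le
  have hcont : ContinuousWithinAt (fun a : ℝ => Real.exp (-(q * a)) * H (1 - Real.exp (-a)))
      (Ici 0) 0 :=
    (Continuous.continuousWithinAt (by fun_prop)).mul (hhc 0 self_mem_Ici)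
  have h := integral_Ioi_of_hasDerivAt_of_tendsto hcont hderiv (hi.sub (hint.const_mul q)) hlim
  rw [integral_sub hi (hint.const_mul q), hv, integral_const_mul] at h
  simp only [neg_zero, Real.exp_zero, sub_self, mul_zero, hH, intervalIntegral.integral_same] at h
  rw [eq_div_iff hq.ne']
  linarith

theorem integrableOn_and_integral_exp_mul_one_sub_exp_rpow_neg {b s : ℝ} (hb : b < 1)
    (hs : 0 < s) :
    IntegrableOn (fun w : ℝ => Real.exp (-(s * w)) * (1 - Real.exp (-w)) ^ (-b)) (Ioi 0) ∧
      ∫ w in Ioi (0:ℝ), Real.exp (-(s * w)) * (1 - Real.exp (-w)) ^ (-b) = beta s (1 - b) := by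
  have h := integrableOn_exp_beta_and_integral hs (sub_pos.2 hb)
  rwa [sub_sub_cancel_left] at h

theorem hasSum_exp_mul_inv_sub {a w : ℝ} (ha : 0 < a) (hw : 0 < w) :
    HasSum (fun n : ℕ => Real.exp (-((n + 1) * a)) * Real.exp (-((n + 1) * w)))
      (Real.exp (-w) * (Real.exp a - Real.exp (-w))⁻¹) := by
  have h := (hasSum_geometric_of_lt_one (Real.exp_pos (-a + -w)).le
    (Real.exp_lt_one_iff.2 (by linarith : -a + -w < 0))).mul_left (Real.exp (-a + -w))
  have e : Real.exp (-w) * (Real.exp a - Real.exp (-w))⁻¹ =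
      Real.exp (-a + -w) * (1 - Real.exp (-a + -w))⁻¹ := by
    have h1 : Real.exp a - Real.exp (-w) = Real.exp a * (1 - Real.exp (-a + -w)) := by
      rw [mul_sub, ← Real.exp_add]
      ring_nf
    rw [h1, mul_inv, ← Real.exp_neg, ← mul_assoc, ← Real.exp_add, add_comm (-w)]
  rw [e]
  refine h.congr_fun fun n => ?_
  rw [← Real.exp_nat_mul, ← Real.exp_add, ← Real.exp_add]
  ring_nf

theorem beta_add_nat_le {b s : ℝ} (hb : b < 1) (hs : 0 < s) (n : ℕ) :
    beta (s + n + 1) (1 - b) ≤ beta s (1 - b) := by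
  obtain ⟨h1, e1⟩ := integrableOn_and_integral_exp_mul_one_sub_exp_rpow_neg
    (b := b) (s := s + n + 1) hb (by positivity)
  obtain ⟨h2, e2⟩ := integrableOn_and_integral_exp_mul_one_sub_exp_rpow_neg (b := b) hb hs
  rw [← e1, ← e2]
  refine setIntegral_mono_on h1 h2 measurableSet_Ioi fun w hw => ?_
  have hw' : 0 < w := hw
  have h3 : 0 ≤ 1 - Real.exp (-w) := by simpa using hw'.le
  refine mul_le_mul_of_nonneg_right (Real.exp_le_exp.2 ?_) (Real.rpow_nonneg h3 _)
  have : (0:ℝ) ≤ n * w := by positivity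
  nlinarith

/-- The inner integral of the singular part, as a series in `exp (-a)`. -/
theorem integrableOn_and_hasSum_inner {a b s : ℝ} (ha : 0 < a) (hb : b < 1) (hs : 0 < s) :
    IntegrableOn (fun w : ℝ => Real.exp (-(s * w)) * (1 - Real.exp (-w)) ^ (-b) *
        (Real.exp (-w) * (Real.exp a - Real.exp (-w))⁻¹)) (Ioi 0) ∧
      HasSum (fun n : ℕ => Real.exp (-((n + 1) * a)) * beta (s + n + 1) (1 - b))
        (∫ w in Ioi (0:ℝ), Real.exp (-(s * w)) * (1 - Real.exp (-w)) ^ (-b) *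
          (Real.exp (-w) * (Real.exp a - Real.exp (-w))⁻¹)) := by
  have hbeta : ∀ n : ℕ, 0 < beta (s + n + 1) (1 - b) := fun n =>
    beta_pos (by positivity) (by linarith)
  have hsm : Summable fun n : ℕ => Real.exp (-((n + 1) * a)) * beta (s + n + 1) (1 - b) := by
    have hg : Summable fun n : ℕ => Real.exp (-((n + 1) * a)) * beta s (1 - b) := by
      have := ((summable_geometric_of_lt_one (Real.exp_pos (-a)).le
        (Real.exp_lt_one_iff.2 (neg_lt_zero.2 ha))).mul_left (Real.exp (-a))).mul_right
          (beta s (1 - b))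
      refine this.congr fun n => ?_
      rw [← Real.exp_nat_mul, ← Real.exp_add]
      ring_nf
    exact hg.of_nonneg_of_le (fun n => mul_nonneg (Real.exp_pos _).le (hbeta n).le)
      fun n => mul_le_mul_of_nonneg_left (beta_add_nat_le hb hs n) (Real.exp_pos _).le
  have hF := fun n : ℕ => integrableOn_and_integral_exp_mul_one_sub_exp_rpow_neg
    (b := b) (s := s + n + 1) hb (by positivity)
  have hS : 0 < ∑' n : ℕ, Real.exp (-((n + 1) * a)) * beta (s + n + 1) (1 - b) :=
    hsm.tsum_pos (fun n => mul_nonneg (Real.exp_pos _).le (hbeta n).le) 0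
      (mul_pos (Real.exp_pos _) (hbeta 0))
  have key := integrableOn_and_integral_eq_of_hasSum (s := Ioi (0:ℝ))
    (F := fun (n : ℕ) (w : ℝ) => Real.exp (-((n + 1) * a)) *
      (Real.exp (-((s + n + 1) * w)) * (1 - Real.exp (-w)) ^ (-b)))
    (f := fun w : ℝ => Real.exp (-(s * w)) * (1 - Real.exp (-w)) ^ (-b) *
        (Real.exp (-w) * (Real.exp a - Real.exp (-w))⁻¹))
    measurableSet_Ioi (fun n => (hF n).1.const_mul _) ?_
    (by simpa only [integral_const_mul, (hF _).2] using hsm.hasSum) hS.ne' ?_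
  · exact ⟨key.1, by rw [key.2]; exact hsm.hasSum⟩
  · intro n w hw
    have h3 : 0 ≤ 1 - Real.exp (-w) := by simpa using (mem_Ioi.1 hw).le
    positivity
  · intro w hw
    have h := (hasSum_exp_mul_inv_sub ha hw).mul_left
      (Real.exp (-(s * w)) * (1 - Real.exp (-w)) ^ (-b))
    refine h.congr_fun fun n => ?_
    rw [show -((s + n + 1) * w) = -(s * w) + -((n + 1) * w) by ring, Real.exp_add]
    ring

theorem integrableOn_and_integral_outer {b p s : ℝ} (hb0 : 0 < b) (hb : b < 1) (hp : 0 < p)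
    (hs : 0 < s) (hps : p ≠ s) :
    IntegrableOn (fun a : ℝ => Real.exp (-((p - b) * a)) * (1 - Real.exp (-a)) ^ b *
        ∫ w in Ioi (0:ℝ), Real.exp (-(s * w)) * (1 - Real.exp (-w)) ^ (-b) *
          (Real.exp (-w) * (Real.exp a - Real.exp (-w))⁻¹)) (Ioi 0) ∧
      ∫ a in Ioi (0:ℝ), Real.exp (-((p - b) * a)) * (1 - Real.exp (-a)) ^ b *
        ∫ w in Ioi (0:ℝ), Real.exp (-(s * w)) * (1 - Real.exp (-w)) ^ (-b) *
          (Real.exp (-w) * (Real.exp a - Real.exp (-w))⁻¹) =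
      Real.Gamma b * Real.Gamma (1 - b) / (p - s) * (1 - gammaRatio b p s) := by
  have hpn : ∀ n : ℕ, 0 < p + n + 1 - b := fun n => by
    have hn : (0:ℝ) ≤ n := n.cast_nonneg
    linarith
  have hbeta : ∀ n : ℕ, 0 < beta (s + n + 1) (1 - b) := fun n =>
    beta_pos (by positivity) (by linarith)
  have hF : ∀ n : ℕ,
      IntegrableOn (fun a : ℝ => Real.exp (-((p + n + 1 - b) * a)) * (1 - Real.exp (-a)) ^ b)
        (Ioi 0) ∧
      ∫ a in Ioi (0:ℝ), Real.exp (-((p + n + 1 - b) * a)) * (1 - Real.exp (-a)) ^ b =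
        beta (p + n + 1 - b) (b + 1) := fun n => by
    have h := integrableOn_exp_beta_and_integral (hpn n) (show 0 < b + 1 by positivity)
    rwa [add_sub_cancel_right] at h
  have hsum := hasSum_beta_mul_beta hb0 hb hp hs hps
  refine integrableOn_and_integral_eq_of_hasSum (s := Ioi (0:ℝ))
    (F := fun (n : ℕ) (a : ℝ) => Real.exp (-((p + n + 1 - b) * a)) * (1 - Real.exp (-a)) ^ b *
      beta (s + n + 1) (1 - b)) measurableSet_Ioi (fun n => (hF n).1.mul_const _) ?_
    (by simpa only [integral_mul_const, (hF _).2] using hsum) ?_ ?_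
  · intro n a ha
    have h3 : 0 ≤ 1 - Real.exp (-a) := by simpa using (mem_Ioi.1 ha).le
    have := (hbeta n).le
    positivity
  · rw [← hsum.tsum_eq]
    have hpos : ∀ n : ℕ, 0 < beta (p + n + 1 - b) (b + 1) * beta (s + n + 1) (1 - b) := fun n =>
      mul_pos (beta_pos (hpn n) (by positivity)) (hbeta n)
    exact (hsum.summable.tsum_pos (fun n => (hpos n).le) 0 (hpos 0)).ne'
  · intro a ha
    have h := (integrableOn_and_hasSum_inner ha hb hs).2.mul_left
      (Real.exp (-((p - b) * a)) * (1 - Real.exp (-a)) ^ b)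
    refine h.congr_fun fun n => ?_
    rw [show -((p + n + 1 - b) * a) = -((p - b) * a) + -((n + 1) * a) by ring, Real.exp_add]
    ring

theorem second_factorisation_identity
    (α ρ : ℝ) (hα : α ∈ Set.Ioo (1:ℝ) 2) (hρ : ρ ∈ Set.Ioo (1 - 1/α) (1/α))
    (q β : ℝ) (hq : 0 < q) (hβ : 0 < β) (hqβ : q ≠ β) :
    ∫ a in Set.Ioi (0:ℝ), ∫ w in Set.Ioi (0:ℝ),
        Real.exp (-q * a - β * w) * undershootDensity α ρ a w =
    (kappaHat α ρ q - kappaHat α ρ β) / ((q - β) * kappaHat α ρ q) := by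
  obtain ⟨hα1, hα2⟩ := hα
  obtain ⟨hρ1, hρ2⟩ := hρ
  have hα0 : 0 < α := by linarith
  rw [lt_div_iff₀ hα0] at hρ2
  rw [sub_lt_iff_lt_add, div_eq_mul_inv, one_mul] at hρ1
  have hρ1' : α < α * ρ + 1 := by
    have := mul_lt_mul_of_pos_left hρ1 hα0
    rwa [mul_add, mul_inv_cancel₀ hα0.ne', mul_one] at this
  obtain ⟨b, hb⟩ : ∃ b, b = α * (1 - ρ) := ⟨_, rfl⟩
  obtain ⟨c, hc⟩ : ∃ c, c = 1 - α * ρ := ⟨_, rfl⟩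
  have hb0 : 0 < b := by rw [hb]; linarith
  have hb1 : b < 1 := by rw [hb]; linarith
  have hc0 : 0 < c := by rw [hc]; linarith
  have hαbc : α = b - c + 1 := by rw [hb, hc]; ring
  have hd0 : 0 < 2 - α := by linarith
  have hs0 : 0 < β + c := by positivity
  have hp0 : 0 < q + c := by positivity
  have hps : q + c ≠ β + c := by simpa using hqβ
  set C : ℝ := Real.sin (Real.pi * b) / Real.pi with hC
  set H : ℝ → ℝ := fun a =>
    ∫ t in (0:ℝ)..(1 - Real.exp (-a)), t ^ (b - 1) * (1 - t) ^ (2 - α - 1) with hH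
  set M : ℝ → ℝ := fun a =>
    ∫ w in Ioi (0:ℝ), Real.exp (-((β + c) * w)) * (1 - Real.exp (-w)) ^ (-b) *
      (Real.exp (-w) * (Real.exp a - Real.exp (-w))⁻¹) with hM
  have hinner : ∀ a ∈ Ioi (0:ℝ), ∫ w in Ioi (0:ℝ),
      Real.exp (-q * a - β * w) * undershootDensity α ρ a w =
      C * (Real.exp (-((q + c - b) * a)) * (1 - Real.exp (-a)) ^ b * M a +
        c * beta (β + c) (1 - b) * (Real.exp (-(q * a)) * H a)) := by
    intro a ha
    obtain ⟨h1, -⟩ := integrableOn_and_hasSum_inner ha hb1 hs0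
    obtain ⟨h2, h3⟩ := integrableOn_and_integral_exp_mul_one_sub_exp_rpow_neg hb1 hs0
    have e : ∀ w : ℝ, Real.exp (-q * a - β * w) * undershootDensity α ρ a w =
        C * (Real.exp (-((q + c - b) * a)) * (1 - Real.exp (-a)) ^ b) *
          (Real.exp (-((β + c) * w)) * (1 - Real.exp (-w)) ^ (-b) *
            (Real.exp (-w) * (Real.exp a - Real.exp (-w))⁻¹)) +
        C * c * (Real.exp (-(q * a)) * H a) *
          (Real.exp (-((β + c) * w)) * (1 - Real.exp (-w)) ^ (-b)) := by
      intro w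
      have e1 : Real.exp (-q * a - β * w) =
          Real.exp (-(q * a)) * Real.exp (-(β * w)) := by
        rw [← Real.exp_add]; ring_nf
      have e2 : Real.exp (-((q + c - b) * a)) =
          Real.exp (-(q * a)) * Real.exp ((α - 1) * a) := by
        rw [← Real.exp_add, hαbc]; ring_nf
      have e3 : Real.exp (-((β + c) * w)) = Real.exp (-(β * w)) * Real.exp (-c * w) := by
        rw [← Real.exp_add]; ring_nf
      have e4 : 1 - α = 2 - α - 1 := by ring
      rw [undershootDensity, mul_assoc Real.pi, ← hb, ← hc, e1, e2, e3, e4]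
      simp only [hH, hC]
      ring
    simp_rw [e]
    rw [integral_add (h1.const_mul _) (h2.const_mul _), integral_const_mul, integral_const_mul, h3]
    simp only [hM]
    ring
  rw [setIntegral_congr_fun measurableSet_Ioi hinner]
  obtain ⟨h1, h2⟩ := integrableOn_and_integral_outer hb0 hb1 hp0 hs0 hps
  obtain ⟨h3, h4⟩ := integrableOn_and_integral_exp_mul_incompleteBeta hb0 hd0 hq
  rw [integral_const_mul, integral_add h1 (h3.const_mul _), integral_const_mul, h2, h4]
  have hCG : C * (Real.Gamma b * Real.Gamma (1 - b)) = 1 := by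
    have hsin : 0 < Real.sin (Real.pi * b) := Real.sin_pos_of_pos_of_lt_pi (by positivity)
      (by nlinarith [Real.pi_pos])
    rw [Real.Gamma_mul_Gamma_one_sub, hC]
    field_simp
  have g1 := (Real.Gamma_pos_of_pos hs0).ne'
  have g2 := (Real.Gamma_pos_of_pos hp0).ne'
  have g3 := (Real.Gamma_pos_of_pos (show 0 < β + c + 1 - b by linarith)).ne'
  have g4 := (Real.Gamma_pos_of_pos (show 0 < q + c + 1 - b by linarith)).ne'
  have hsub : q - β ≠ 0 := sub_ne_zero.2 hqβ
  have f1 : 1 - α * ρ + q = q + c := by rw [hc]; ring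
  have f2 : 1 - α * ρ + β = β + c := by rw [hc]; ring
  have f3 : 2 - α + q = q + c + 1 - b := by rw [hαbc]; ring
  have f4 : 2 - α + β = β + c + 1 - b := by rw [hαbc]; ring
  have f5 : q + c - (β + c) = q - β := by ring
  have f6 : β + c + (1 - b) = β + c + 1 - b := by ring
  have f7 : q + (2 - α) = q + c + 1 - b := by rw [hαbc]; ring
  have f8 : q + c + 1 - b + b = q + c + 1 := by ring
  rw [kappaHat, kappaHat, f1, f2, f3, f4, f5, f7]
  unfold beta gammaRatio
  rw [f6, f8, Real.Gamma_add_one hs0.ne', Real.Gamma_add_one hp0.ne']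
  have hq0 := hq.ne'
  have hp0' := hp0.ne'
  calc _ = C * (Real.Gamma b * Real.Gamma (1 - b)) *
        (1 / (q - β) * (1 - (β + c) * Real.Gamma (β + c) * Real.Gamma (q + c + 1 - b) /
          (Real.Gamma (β + c + 1 - b) * ((q + c) * Real.Gamma (q + c)))) +
        c * Real.Gamma (β + c) / Real.Gamma (β + c + 1 - b) *
          (Real.Gamma (q + c + 1 - b) / ((q + c) * Real.Gamma (q + c))) / q) := by ring
    _ = _ := by
      rw [hCG, one_mul]
      field_simp
      ring
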